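/- Assume the tail function F̄_R(y) := P(R ≥ y) is regularly varying of index −m with m > γ. Let v : (0,∞) → (0,∞) satisfy v(t)/t → ∞ as t → ∞. Then μ^{ℓ,r}_t([v(t), ∞)) = D·t^{−(γ−1)}·F̄_R(v(t)/t)·(1+o(1)) as t → ∞, where D := m(m−1)/(γ(γ−1)(m−γ+1)(m−γ)). -/

import Mathlib

open MeasureTheory Filter Set
open scoped ENNReal NNReal Topology

noncomputable section

/-- `ℓ_t(s,u)`: the length of the interval `[s,s+u] ∩ [0,t]`. -/
def ellK (t s u : ℝ) : ℝ := max 0 (min (s + u) t - max s 0)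

/-- The intensity measure `u^{-γ-1} du` on `(0,∞)`. -/
def muU (γ : ℝ) : Measure ℝ :=
  (volume.restrict (Set.Ioi 0)).withDensity fun u => ENNReal.ofReal (u ^ (-γ - 1))

/-- The measure `μ^ℓ_t` on `(0,∞)`:
`μ^ℓ_t(A) = ∫_ℝ ∫_0^∞ 1{ℓ_t(s,u) ∈ A} u^{-γ-1} du ds`. -/
def muEll (γ t : ℝ) : Measure ℝ :=
  (Measure.map (fun p : ℝ × ℝ => ellK t p.1 p.2)
    ((volume : Measure ℝ).prod (muU γ))).restrict (Set.Ioi 0)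

/-- The measure `μ^{ℓ,r}_t` on `(0,∞)`:
`μ^{ℓ,r}_t(A) = ∫_{(0,∞)} ∫_{(0,∞)} 1{rℓ ∈ A} μ^ℓ_t(dℓ) F_R(dr)`. -/
def muEllR (γ t : ℝ) (FR : Measure ℝ) : Measure ℝ :=
  (Measure.map (fun p : ℝ × ℝ => p.1 * p.2) (FR.prod (muEll γ t))).restrict (Set.Ioi 0)

/-- The measure `ν` on `[0,1]`: density `s^{-(γ+1)} + ((2-γ)/γ)·s^{-γ}` on `(0,1)` with
respect to Lebesgue measure, together with an atom of mass `1/(γ(γ-1))` at the point `1`. -/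
def nuM (γ : ℝ) : Measure ℝ :=
  (volume.restrict (Set.Ioo 0 1)).withDensity
      (fun s => ENNReal.ofReal (s ^ (-(γ + 1)) + (2 - γ) / γ * s ^ (-γ)))
    + (Real.toNNReal (1 / (γ * (γ - 1)))) • Measure.dirac 1

instance nuM.sigmaFinite (γ : ℝ) : SigmaFinite (nuM γ) := by
  unfold nuM; infer_instance

end

/-!
By scaling, `μ^ℓ_t` is `t^{-(γ-1)}` times the image of `ν` under `s ↦ t·s`; since both measures are
explicit, it is enough to compare tails. By Tonelli the tail of `μ^{ℓ,r}_t` at `w` is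
`t^{-(γ-1)} ∫ F̄_R(y/s) ν(ds)` with `y = w/t`. Dividing by `F̄_R(y)`, the integrand tends to `s^m`,
and Potter's bound dominates it by a multiple of `s^q` for any `γ < q < m`, which is `ν`-integrable.
Hence the limit constant is the moment `∫ s^m ν(ds)`.
-/

/-! ### Regularly varying functions -/

/-- `F` is regularly varying at infinity of index `ρ`. The scaling limit is asked of quotients of
real numbers, so it forces `F` to be eventually nonzero (take `c = 1`). -/
def IsRegularlyVarying (F : ℝ → ℝ) (ρ : ℝ) : Prop :=
  ∀ c : ℝ, 0 < c → Tendsto (fun y => F (c * y) / F y) atTop (𝓝 (c ^ ρ))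

theorem le_two_pow_mul_of_le_two_mul {F : ℝ → ℝ} {c Y : ℝ} (hc : 0 ≤ c) (hY : 0 ≤ Y)
    (h : ∀ y, Y ≤ y → F (2 * y) ≤ c * F y) (n : ℕ) {y : ℝ} (hy : Y ≤ y) :
    F (2 ^ n * y) ≤ c ^ n * F y := by
  induction n with
  | zero => simp
  | succ n ih =>
    have hYn : Y ≤ 2 ^ n * y := hy.trans
      (le_mul_of_one_le_left (hY.trans hy) (one_le_pow₀ one_le_two))
    calc F (2 ^ (n + 1) * y) = F (2 * (2 ^ n * y)) := by ring_nf
      _ ≤ c * F (2 ^ n * y) := h _ hYn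
      _ ≤ c * (c ^ n * F y) := by gcongr
      _ = c ^ (n + 1) * F y := by ring

namespace IsRegularlyVarying

variable {F : ℝ → ℝ} {m q ρ : ℝ}

theorem pos (h : IsRegularlyVarying F ρ) (hanti : Antitone F) (hnonneg : ∀ y, 0 ≤ F y) (y : ℝ) :
    0 < F y := by
  have hone : Tendsto (fun z => F z / F z) atTop (𝓝 1) := by simpa using h 1 one_pos
  obtain ⟨z, hz, hyz⟩ :=
    ((hone.eventually_ne one_ne_zero).and (eventually_ge_atTop y)).exists
  exact ((hnonneg z).lt_of_ne' (div_ne_zero_iff.1 hz).1).trans_le (hanti hyz)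

theorem eventually_two_mul_le (h : IsRegularlyVarying F (-m)) (hpos : ∀ y, 0 < F y)
    (hqm : q < m) : ∀ᶠ y in atTop, F (2 * y) ≤ 2 ^ (-q) * F y := by
  have hlt : (2 : ℝ) ^ (-m) < 2 ^ (-q) :=
    Real.rpow_lt_rpow_of_exponent_lt one_lt_two (neg_lt_neg hqm)
  filter_upwards [(h 2 two_pos).eventually_lt_const hlt] with y hy
  exact ((div_lt_iff₀ (hpos y)).1 hy).le

/-- One-sided Potter bound; monotonicity replaces the uniform convergence theorem. -/
theorem eventually_potter_le (h : IsRegularlyVarying F (-m)) (hanti : Antitone F)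
    (hnonneg : ∀ y, 0 ≤ F y) (hq : 0 ≤ q) (hqm : q < m) :
    ∀ᶠ y in atTop, ∀ x, 1 ≤ x → F (x * y) ≤ 2 ^ q * x ^ (-q) * F y := by
  obtain ⟨Y, hY⟩ := eventually_atTop.1
    (h.eventually_two_mul_le (h.pos hanti hnonneg) hqm)
  filter_upwards [eventually_ge_atTop (max Y 0)] with y hy x hx
  have hy0 : 0 ≤ y := (le_max_right _ _).trans hy
  obtain ⟨n, hnx, hxn⟩ := exists_nat_pow_near hx one_lt_two
  have hdyadic : ((2 : ℝ) ^ (-q)) ^ n ≤ 2 ^ q * x ^ (-q) :=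
    calc ((2 : ℝ) ^ (-q)) ^ n = 2 ^ q * ((2 : ℝ) ^ (n + 1)) ^ (-q) := by
          rw [← Real.rpow_natCast, ← Real.rpow_natCast, ← Real.rpow_mul zero_le_two,
            ← Real.rpow_mul zero_le_two, ← Real.rpow_add two_pos]
          push_cast
          ring_nf
      _ ≤ 2 ^ q * x ^ (-q) := by
          gcongr 2 ^ q * ?_
          exact Real.rpow_le_rpow_of_nonpos (by linarith) hxn.le (by linarith)
  calc F (x * y) ≤ F (2 ^ n * y) := hanti (by gcongr)
    _ ≤ ((2 : ℝ) ^ (-q)) ^ n * F y :=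
        le_two_pow_mul_of_le_two_mul (by positivity) (le_max_right Y 0)
          (fun z hz => hY z ((le_max_left _ _).trans hz)) n hy
    _ ≤ 2 ^ q * x ^ (-q) * F y := mul_le_mul_of_nonneg_right hdyadic (hnonneg y)

/-- A form of Breiman's lemma; the Potter bound supplies the dominating function. -/
theorem tendsto_integral_div (h : IsRegularlyVarying F (-m)) (hanti : Antitone F)
    (hnonneg : ∀ y, 0 ≤ F y) {ν : Measure ℝ} (hν : ∀ᵐ s ∂ν, s ∈ Ioc 0 1)
    (hq : 0 ≤ q) (hqm : q < m) (hint : Integrable (fun s => s ^ q) ν) :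
    Tendsto (fun y => ∫ s, F (y / s) / F y ∂ν) atTop (𝓝 (∫ s, s ^ m ∂ν)) := by
  refine tendsto_integral_filter_of_dominated_convergence (fun s => 2 ^ q * s ^ q) ?_ ?_
    (hint.const_mul _) ?_
  · refine .of_forall fun y => Measurable.aestronglyMeasurable ?_
    exact (hanti.measurable.comp (measurable_const.div measurable_id)).div_const _
  · filter_upwards [h.eventually_potter_le hanti hnonneg hq hqm] with y hy
    filter_upwards [hν] with s ⟨hs0, hs1⟩
    have hbound := hy s⁻¹ ((one_le_inv₀ hs0).2 hs1)
    rw [Real.inv_rpow hs0.le, Real.rpow_neg hs0.le, inv_inv, inv_mul_eq_div] at hbound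
    rw [Real.norm_of_nonneg (div_nonneg (hnonneg _) (hnonneg _))]
    exact (div_le_iff₀ (h.pos hanti hnonneg y)).2 hbound
  · filter_upwards [hν] with s ⟨hs0, _⟩
    have hlim := h s⁻¹ (inv_pos.2 hs0)
    simpa only [Real.inv_rpow hs0.le, Real.rpow_neg hs0.le, inv_inv, inv_mul_eq_div] using hlim

end IsRegularlyVarying

theorem antitone_measureReal_Ici {α : Type*} [Preorder α] [MeasurableSpace α] (μ : Measure α)
    [IsFiniteMeasure μ] : Antitone fun y => μ.real (Ici y) :=
  fun _ _ hab => measureReal_mono (Ici_subset_Ici.2 hab)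

/-! ### The measure `ν` -/

/-- The density of the absolutely continuous part of `nuM γ`. -/
noncomputable def nuDensity (γ s : ℝ) : ℝ := s ^ (-(γ + 1)) + (2 - γ) / γ * s ^ (-γ)

section nuM

variable {γ p b s : ℝ}

theorem nuM_eq (γ : ℝ) :
    nuM γ = (volume.restrict (Ioo 0 1)).withDensity (fun s => ENNReal.ofReal (nuDensity γ s))
      + (Real.toNNReal (1 / (γ * (γ - 1)))) • Measure.dirac 1 := rfl

theorem measurable_nuDensity (γ : ℝ) : Measurable (nuDensity γ) := by
  unfold nuDensity
  fun_prop

theorem nuDensity_nonneg (hγ : 0 < γ) (hs : s ∈ Ioo 0 1) : 0 ≤ nuDensity γ s := by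
  obtain ⟨hs0, hs1⟩ := hs
  have hfactor : nuDensity γ s = s ^ (-(γ + 1)) * ((1 - s) + 2 / γ * s) := by
    have hpow : s ^ (-γ) = s ^ (-(γ + 1)) * s := by
      rw [← Real.rpow_add_one hs0.ne']
      ring_nf
    rw [nuDensity, hpow]
    field_simp
    ring
  have : 0 < 1 - s := sub_pos.2 hs1
  rw [hfactor]
  positivity

theorem ae_nuM_mem_Ioc (γ : ℝ) : ∀ᵐ s ∂nuM γ, s ∈ Ioc 0 1 := by
  rw [nuM_eq, ae_add_measure_iff]
  constructor
  · refine (withDensity_absolutelyContinuous _ _).ae_le ?_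
    filter_upwards [ae_restrict_mem measurableSet_Ioo] with s hs
    exact Ioo_subset_Ioc_self hs
  · exact Measure.ae_smul_measure ((ae_dirac_iff measurableSet_Ioc).2 (by simp)) _

theorem rpow_mul_nuDensity (hs : 0 < s) :
    s ^ p * nuDensity γ s = s ^ (p - γ - 1) + (2 - γ) / γ * s ^ (p - γ) := by
  rw [nuDensity, mul_add, mul_left_comm, ← Real.rpow_add hs, ← Real.rpow_add hs]
  ring_nf

theorem toReal_nuDensity_smul_rpow (hγ : 0 < γ) (hs : s ∈ Ioo 0 1) :
    (ENNReal.ofReal (nuDensity γ s)).toReal • s ^ p =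
      s ^ (p - γ - 1) + (2 - γ) / γ * s ^ (p - γ) := by
  rw [ENNReal.toReal_ofReal (nuDensity_nonneg hγ hs), smul_eq_mul, mul_comm,
    rpow_mul_nuDensity hs.1]

theorem integrable_rpow_nuM (hγ : 0 < γ) (hp : γ < p) : Integrable (fun s => s ^ p) (nuM γ) := by
  rw [nuM_eq, integrable_add_measure]
  refine ⟨?_, (integrable_dirac (by simp)).smul_measure_nnreal⟩
  rw [integrable_withDensity_iff_integrable_smul' (measurable_nuDensity γ).ennreal_ofReal
    (.of_forall fun _ => ENNReal.ofReal_lt_top)]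
  have hpow : ∀ {r : ℝ}, -1 < r → IntegrableOn (fun s : ℝ => s ^ r) (Ioo 0 1) :=
    (intervalIntegral.integrableOn_Ioo_rpow_iff one_pos).2
  refine IntegrableOn.congr_fun ((hpow (r := p - γ - 1) (by linarith)).add
    ((hpow (r := p - γ) (by linarith)).const_mul ((2 - γ) / γ))) ?_ measurableSet_Ioo
  exact fun s hs => (toReal_nuDensity_smul_rpow hγ hs).symm

theorem integral_rpow_nuM (hγ : 1 < γ) (hp : γ < p) :
    ∫ s, s ^ p ∂nuM γ = p * (p - 1) / (γ * (γ - 1) * (p - γ + 1) * (p - γ)) := by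
  have hγ0 : 0 < γ := by linarith
  have hγ1 : 0 < γ - 1 := by linarith
  have hpγ : 0 < p - γ := by linarith
  have hint := integrable_rpow_nuM hγ0 hp
  rw [nuM_eq, integrable_add_measure] at hint
  have hdensity : ∫ s in Ioo (0 : ℝ) 1, (ENNReal.ofReal (nuDensity γ s)).toReal • s ^ p =
      1 / (p - γ) + (2 - γ) / γ * (1 / (p - γ + 1)) := by
    rw [setIntegral_congr_fun measurableSet_Ioo fun s hs => toReal_nuDensity_smul_rpow hγ0 hs,
      ← integral_Ioc_eq_integral_Ioo, ← intervalIntegral.integral_of_le zero_le_one,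
      intervalIntegral.integral_add (intervalIntegral.intervalIntegrable_rpow' (by linarith))
        ((intervalIntegral.intervalIntegrable_rpow' (by linarith)).const_mul _),
      intervalIntegral.integral_const_mul, integral_rpow (.inl (by linarith)),
      integral_rpow (.inl (by linarith)), sub_add_cancel, Real.one_rpow, Real.one_rpow,
      Real.zero_rpow hpγ.ne', Real.zero_rpow (by linarith), sub_zero]
  rw [nuM_eq, integral_add_measure hint.1 hint.2,
    integral_withDensity_eq_integral_toReal_smul (measurable_nuDensity γ).ennreal_ofReal
      (.of_forall fun _ => ENNReal.ofReal_lt_top), hdensity, integral_smul_nnreal_measure,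
    integral_dirac, Real.one_rpow, NNReal.smul_def, Real.coe_toNNReal _ (by positivity)]
  simp only [smul_eq_mul]
  field_simp
  ring

theorem intervalIntegrable_rpow_of_pos {c : ℝ} (hb : 0 < b) (hc : 0 < c) (p : ℝ) :
    IntervalIntegrable (fun s : ℝ => s ^ p) volume b c :=
  intervalIntegral.intervalIntegrable_rpow (.inr (notMem_uIcc_of_lt hb hc))

theorem intervalIntegrable_nuDensity {c : ℝ} (γ : ℝ) (hb : 0 < b) (hc : 0 < c) :
    IntervalIntegrable (nuDensity γ) volume b c :=
  (intervalIntegrable_rpow_of_pos hb hc _).add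
    ((intervalIntegrable_rpow_of_pos hb hc _).const_mul _)

theorem intervalIntegral_nuDensity (hγ : 1 < γ) (hb : 0 < b) :
    ∫ s in b..1, nuDensity γ s =
      (b ^ (-γ) - 1) / γ + (2 - γ) / (γ * (γ - 1)) * (b ^ (1 - γ) - 1) := by
  have hγ1 : 0 < γ - 1 := by linarith
  have hnotMem : (0 : ℝ) ∉ uIcc b 1 := notMem_uIcc_of_lt hb one_pos
  unfold nuDensity
  rw [intervalIntegral.integral_add (intervalIntegrable_rpow_of_pos hb one_pos _)
      ((intervalIntegrable_rpow_of_pos hb one_pos _).const_mul _),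
    intervalIntegral.integral_const_mul, integral_rpow (.inr ⟨by linarith, hnotMem⟩),
    integral_rpow (.inr ⟨by linarith, hnotMem⟩), Real.one_rpow, Real.one_rpow,
    show -(γ + 1) + 1 = -γ by ring, show -γ + 1 = -(γ - 1) by ring,
    show 1 - γ = -(γ - 1) by ring]
  field_simp
  ring

theorem nuM_Ici_of_le (hγ : 1 < γ) (hb : 0 < b) (hb1 : b ≤ 1) :
    nuM γ (Ici b) =
      ENNReal.ofReal (b ^ (-γ) / γ + (2 - γ) / (γ * (γ - 1)) * b ^ (1 - γ)) := by
  have hγ1 : 0 < γ - 1 := by linarith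
  have hnonneg : ∀ s ∈ Ioo b 1, 0 ≤ nuDensity γ s := fun s hs =>
    nuDensity_nonneg (by linarith) (Ioo_subset_Ioo_left hb.le hs)
  have hset : Ici b ∩ Ioo 0 1 = Ico b 1 := by grind
  have hdensity : ∫⁻ s in Ico b 1, ENNReal.ofReal (nuDensity γ s) =
      ENNReal.ofReal (∫ s in b..1, nuDensity γ s) := by
    rw [intervalIntegral.integral_of_le hb1, integral_Ioc_eq_integral_Ioo,
      setLIntegral_congr Ioo_ae_eq_Ico.symm, ofReal_integral_eq_lintegral_ofReal
        ((intervalIntegrable_iff_integrableOn_Ioo_of_le hb1).1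
          (intervalIntegrable_nuDensity γ hb one_pos))]
    exact ae_restrict_of_forall_mem measurableSet_Ioo hnonneg
  have hintegral_nonneg : 0 ≤ ∫ s in b..1, nuDensity γ s := by
    rw [intervalIntegral.integral_of_le hb1, integral_Ioc_eq_integral_Ioo]
    exact setIntegral_nonneg measurableSet_Ioo hnonneg
  have hatom : ((Real.toNNReal (1 / (γ * (γ - 1)))) • Measure.dirac (1 : ℝ)) (Ici b) =
      ENNReal.ofReal (1 / (γ * (γ - 1))) := by
    rw [Measure.smul_apply, Measure.dirac_apply_of_mem (mem_Ici.2 hb1), ENNReal.smul_def,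
      smul_eq_mul, mul_one, ENNReal.ofReal]
  rw [nuM_eq, Measure.add_apply, withDensity_apply _ measurableSet_Ici,
    Measure.restrict_restrict measurableSet_Ici, hset, hdensity, hatom,
    ← ENNReal.ofReal_add hintegral_nonneg (by positivity), intervalIntegral_nuDensity hγ hb]
  congr 1
  field_simp
  ring

theorem nuM_Ici_of_lt (hb : 1 < b) : nuM γ (Ici b) = 0 := by
  refine measure_mono_null (fun s hs => ?_) (ae_nuM_mem_Ioc γ)
  exact fun h => (hb.trans_le hs).not_ge h.2

end nuM

/-! ### Interval lengths -/

section muEll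

variable {γ t a : ℝ}

instance muU.sFinite (γ : ℝ) : SFinite (muU γ) := by
  unfold muU
  infer_instance

instance muEll.sFinite (γ t : ℝ) : SFinite (muEll γ t) := by
  unfold muEll
  infer_instance

theorem measurable_ellK (t : ℝ) : Measurable fun p : ℝ × ℝ => ellK t p.1 p.2 := by
  unfold ellK
  fun_prop

theorem le_ellK_iff {s u : ℝ} (ha : 0 < a) :
    a ≤ ellK t s u ↔ a ≤ t ∧ a ≤ u ∧ s ∈ Icc (a - u) (t - a) := by
  rw [ellK, le_max_iff, or_iff_right ha.not_ge, mem_Icc]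
  grind

theorem muEll_Ici_eq_lintegral (ha : 0 < a) :
    muEll γ t (Ici a) =
      ∫⁻ u in Ioi 0, ENNReal.ofReal (u ^ (-γ - 1)) * volume {s | a ≤ ellK t s u} := by
  have hset := measurable_ellK t (measurableSet_Ici (a := a))
  rw [muEll, Measure.restrict_apply measurableSet_Ici, inter_eq_left.2 (Ici_subset_Ioi.2 ha),
    Measure.map_apply (measurable_ellK t) measurableSet_Ici, Measure.prod_apply_symm hset, muU,
    lintegral_withDensity_eq_lintegral_mul₀ (by fun_prop)
      (measurable_measure_prodMk_right hset).aemeasurable]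
  rfl

theorem eqOn_rpow_mul_const_add (γ : ℝ) (ha : 0 < a) (c : ℝ) :
    EqOn (fun u => u ^ (-γ - 1) * (c + u)) (fun u => c * u ^ (-γ - 1) + u ^ (-γ)) (Ioi a) := by
  intro u hu
  have hu0 : u ≠ 0 := (ha.trans hu).ne'
  simp only [mul_add, mul_comm c, Real.rpow_sub_one hu0, div_mul_cancel₀ _ hu0]

theorem integrableOn_Ioi_rpow_mul_const_add (hγ : 1 < γ) (ha : 0 < a) (c : ℝ) :
    IntegrableOn (fun u => u ^ (-γ - 1) * (c + u)) (Ioi a) := by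
  rw [integrableOn_congr_fun (eqOn_rpow_mul_const_add γ ha c) measurableSet_Ioi]
  exact ((integrableOn_Ioi_rpow_of_lt (by linarith) ha).const_mul c).add
    (integrableOn_Ioi_rpow_of_lt (by linarith) ha)

theorem integral_Ioi_rpow_mul_const_add (hγ : 1 < γ) (ha : 0 < a) (c : ℝ) :
    ∫ u in Ioi a, u ^ (-γ - 1) * (c + u) = c * (a ^ (-γ) / γ) + a ^ (1 - γ) / (γ - 1) := by
  rw [setIntegral_congr_fun measurableSet_Ioi (eqOn_rpow_mul_const_add γ ha c),
    integral_add ((integrableOn_Ioi_rpow_of_lt (by linarith) ha).const_mul c)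
      (integrableOn_Ioi_rpow_of_lt (by linarith) ha),
    integral_const_mul, integral_Ioi_rpow_of_lt (by linarith) ha,
    integral_Ioi_rpow_of_lt (by linarith) ha, sub_add_cancel, neg_div_neg_eq,
    show -γ + 1 = -(γ - 1) by ring, neg_div_neg_eq, neg_sub]

theorem volume_setOf_le_ellK (ha : 0 < a) (hat : a ≤ t) (u : ℝ) :
    volume {s | a ≤ ellK t s u} =
      (Ici a).indicator (fun u => ENNReal.ofReal (t - 2 * a + u)) u := by
  by_cases hau : a ≤ u
  · simp only [le_ellK_iff ha, hat, hau, true_and, ofPred_mem_eq, Real.volume_Icc, mem_Ici,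
      indicator_of_mem]
    ring_nf
  · simp [le_ellK_iff ha, hau]

theorem muEll_Ici_of_le (hγ : 1 < γ) (ha : 0 < a) (hat : a ≤ t) :
    muEll γ t (Ici a) =
      ENNReal.ofReal ((t - 2 * a) * (a ^ (-γ) / γ) + a ^ (1 - γ) / (γ - 1)) := by
  have hnonneg : ∀ u ∈ Ioi a, 0 ≤ u ^ (-γ - 1) * (t - 2 * a + u) := fun u hu =>
    mul_nonneg (Real.rpow_nonneg (ha.trans hu).le _) (by linarith [mem_Ioi.1 hu])
  calc muEll γ t (Ici a)
      = ∫⁻ u in Ioi 0, (Ici a).indicator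
          (fun u => ENNReal.ofReal (u ^ (-γ - 1)) * ENNReal.ofReal (t - 2 * a + u)) u := by
        rw [muEll_Ici_eq_lintegral ha]
        simp only [volume_setOf_le_ellK ha hat, indicator_mul_right]
    _ = ∫⁻ u in Ioi a, ENNReal.ofReal (u ^ (-γ - 1)) * ENNReal.ofReal (t - 2 * a + u) := by
        rw [setLIntegral_indicator measurableSet_Ici, inter_eq_left.2 (Ici_subset_Ioi.2 ha),
          setLIntegral_congr Ioi_ae_eq_Ici.symm]
    _ = ∫⁻ u in Ioi a, ENNReal.ofReal (u ^ (-γ - 1) * (t - 2 * a + u)) :=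
        setLIntegral_congr_fun measurableSet_Ioi fun u hu =>
          (ENNReal.ofReal_mul (Real.rpow_nonneg (ha.trans hu).le _)).symm
    _ = ENNReal.ofReal ((t - 2 * a) * (a ^ (-γ) / γ) + a ^ (1 - γ) / (γ - 1)) := by
        rw [← integral_Ioi_rpow_mul_const_add hγ ha, ofReal_integral_eq_lintegral_ofReal
          (integrableOn_Ioi_rpow_mul_const_add hγ ha _)
          (ae_restrict_of_forall_mem measurableSet_Ioi hnonneg)]

theorem muEll_Ici_of_lt (ha : 0 < a) (hta : t < a) : muEll γ t (Ici a) = 0 := by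
  simp [muEll_Ici_eq_lintegral ha, le_ellK_iff ha, hta.not_ge]

theorem muEll_Ici_eq_nuM (hγ : 1 < γ) (ht : 0 < t) (ha : 0 < a) :
    muEll γ t (Ici a) = ENNReal.ofReal (t ^ (-(γ - 1))) * nuM γ (Ici (a / t)) := by
  rcases le_or_gt a t with hat | hta
  · have hγ1 : 0 < γ - 1 := by linarith
    rw [muEll_Ici_of_le hγ ha hat, nuM_Ici_of_le hγ (by positivity) ((div_le_one ht).2 hat),
      ← ENNReal.ofReal_mul (by positivity), neg_sub, Real.div_rpow ha.le ht.le,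
      Real.div_rpow ha.le ht.le]
    have htγ : t ^ (1 - γ) = t * t ^ (-γ) := by
      rw [← Real.rpow_one_add' ht.le (by linarith), sub_eq_add_neg]
    have haγ : a ^ (1 - γ) = a * a ^ (-γ) := by
      rw [← Real.rpow_one_add' ha.le (by linarith), sub_eq_add_neg]
    rw [htγ, haγ]
    congr 1
    field_simp
    ring
  · rw [muEll_Ici_of_lt ha hta, nuM_Ici_of_lt ((one_lt_div ht).2 hta), mul_zero]

end muEll

/-! ### The multiplicative convolution -/

section muEllR

variable {γ t w : ℝ}

theorem muEllR_Ici_eq_lintegral_muEll (μ : Measure ℝ) (γ t : ℝ) (hw : 0 < w) :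
    muEllR γ t μ (Ici w) = ∫⁻ r, muEll γ t {l | w ≤ r * l} ∂μ := by
  have hmul : Measurable fun p : ℝ × ℝ => p.1 * p.2 := by fun_prop
  rw [muEllR, Measure.restrict_apply measurableSet_Ici, inter_eq_left.2 (Ici_subset_Ioi.2 hw),
    Measure.map_apply hmul measurableSet_Ici, Measure.prod_apply (hmul measurableSet_Ici)]
  rfl

theorem measure_setOf_le_mul_of_nonpos {ν : Measure ℝ} (hν : ∀ᵐ l ∂ν, 0 < l) {r : ℝ}
    (hr : r ≤ 0) (hw : 0 < w) : ν {l | w ≤ r * l} = 0 := by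
  refine measure_mono_null (fun l (hl : w ≤ r * l) => ?_) hν
  exact fun hl0 => (hw.trans_le hl).not_ge (mul_nonpos_of_nonpos_of_nonneg hr (le_of_lt hl0))

theorem muEll_setOf_le_mul_eq_nuM (hγ : 1 < γ) (ht : 0 < t) (hw : 0 < w) (r : ℝ) :
    muEll γ t {l | w ≤ r * l} =
      ENNReal.ofReal (t ^ (-(γ - 1))) * nuM γ {s | w / t ≤ r * s} := by
  rcases le_or_gt r 0 with hr | hr
  · have hpos : ∀ᵐ l ∂muEll γ t, 0 < l := ae_restrict_mem measurableSet_Ioi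
    rw [measure_setOf_le_mul_of_nonpos hpos hr hw,
      measure_setOf_le_mul_of_nonpos ((ae_nuM_mem_Ioc γ).mono fun _ hs => hs.1) hr
        (div_pos hw ht), mul_zero]
  · have hset : ∀ c, {l | c ≤ r * l} = Ici (c / r) := fun c => by
      ext l
      exact (div_le_iff₀' hr).symm
    rw [hset, hset, muEll_Ici_eq_nuM hγ ht (div_pos hw hr), div_right_comm]

theorem muEllR_Ici_eq_lintegral_nuM (μ : Measure ℝ) [SFinite μ] (hγ : 1 < γ) (ht : 0 < t)
    (hw : 0 < w) :
    muEllR γ t μ (Ici w) =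
      ENNReal.ofReal (t ^ (-(γ - 1))) * ∫⁻ s, μ (Ici (w / t / s)) ∂nuM γ := by
  have hset : MeasurableSet {z : ℝ × ℝ | w / t ≤ z.1 * z.2} :=
    measurableSet_le measurable_const (by fun_prop)
  calc muEllR γ t μ (Ici w)
      = ∫⁻ r, ENNReal.ofReal (t ^ (-(γ - 1))) * nuM γ {s | w / t ≤ r * s} ∂μ := by
        rw [muEllR_Ici_eq_lintegral_muEll μ γ t hw]
        simp only [muEll_setOf_le_mul_eq_nuM hγ ht hw]
    _ = ENNReal.ofReal (t ^ (-(γ - 1))) * μ.prod (nuM γ) {z | w / t ≤ z.1 * z.2} := by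
        rw [Measure.prod_apply hset]
        exact lintegral_const_mul _ (measurable_measure_prodMk_left hset)
    _ = ENNReal.ofReal (t ^ (-(γ - 1))) * ∫⁻ s, μ (Ici (w / t / s)) ∂nuM γ := by
        rw [Measure.prod_apply_symm hset]
        congr 1
        refine lintegral_congr_ae ?_
        filter_upwards [ae_nuM_mem_Ioc γ] with s ⟨hs, _⟩
        congr 1
        ext r
        exact (div_le_iff₀ hs).symm

theorem toReal_muEllR_Ici (μ : Measure ℝ) [IsFiniteMeasure μ] (hγ : 1 < γ) (ht : 0 < t)
    (hw : 0 < w) :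
    (muEllR γ t μ (Ici w)).toReal =
      t ^ (-(γ - 1)) * ∫ s, μ.real (Ici (w / t / s)) ∂nuM γ := by
  have hmeas : Measurable fun s => μ (Ici (w / t / s)) :=
    Antitone.measurable (fun _ _ hab => measure_mono (Ici_subset_Ici.2 hab)) |>.comp
      (measurable_const.div measurable_id)
  rw [muEllR_Ici_eq_lintegral_nuM μ hγ ht hw, ENNReal.toReal_mul,
    ENNReal.toReal_ofReal (by positivity), ← integral_toReal hmeas.aemeasurable
      (.of_forall fun _ => measure_lt_top _ _)]
  rfl

end muEllR

theorem stmt_18_general {γ m : ℝ} (hγ : 1 < γ) (hm : γ < m) (μ : Measure ℝ) [IsFiniteMeasure μ]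
    (hreg : IsRegularlyVarying (fun y => μ.real (Ici y)) (-m)) {v : ℝ → ℝ}
    (hvt : Tendsto (fun t => v t / t) atTop atTop) :
    Tendsto
      (fun t => (muEllR γ t μ (Ici (v t))).toReal / (t ^ (-(γ - 1)) * μ.real (Ici (v t / t))))
      atTop (𝓝 (m * (m - 1) / (γ * (γ - 1) * (m - γ + 1) * (m - γ)))) := by
  obtain ⟨q, hγq, hqm⟩ := exists_between hm
  have hbreiman := hreg.tendsto_integral_div (antitone_measureReal_Ici μ)
    (fun _ => measureReal_nonneg) (ae_nuM_mem_Ioc γ) (by linarith) hqm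
    (integrable_rpow_nuM (by linarith) hγq)
  rw [integral_rpow_nuM hγ hm] at hbreiman
  refine (hbreiman.comp hvt).congr' ?_
  filter_upwards [eventually_gt_atTop 0, hvt.eventually_gt_atTop 0] with t ht hv
  rw [toReal_muEllR_Ici μ hγ ht ((div_pos_iff_of_pos_right ht).1 hv),
    mul_div_mul_left _ _ (Real.rpow_pos_of_pos ht _).ne', Function.comp_apply, integral_div]

/-- If `F̄_R` is regularly varying of index `-m`, `m > γ`, and `v(t)/t → ∞`, then
`μ^{ℓ,r}_t([v(t),∞)) = D·t^{-(γ-1)}·F̄_R(v(t)/t)·(1+o(1))` as `t → ∞`, with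
`D = m(m-1)/(γ(γ-1)(m-γ+1)(m-γ))`. -/
theorem stmt_18 (γ : ℝ) (hγ1 : 1 < γ) (hγ2 : γ < 2)
    (FR : Measure ℝ) [IsProbabilityMeasure FR] (hFRpos : FR (Set.Iic 0) = 0)
    (hmom : Integrable (fun r => r ^ γ) FR)
    (m : ℝ) (hm : γ < m)
    (hreg : ∀ c : ℝ, 0 < c →
      Tendsto (fun y => (FR (Set.Ici (c * y))).toReal / (FR (Set.Ici y)).toReal)
        atTop (𝓝 (c ^ (-m))))
    (v : ℝ → ℝ) (hvpos : ∀ t, 0 < v t)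
    (hvt : Tendsto (fun t => v t / t) atTop atTop) :
    Tendsto
      (fun t => (muEllR γ t FR (Set.Ici (v t))).toReal
        / (t ^ (-(γ - 1)) * (FR (Set.Ici (v t / t))).toReal))
      atTop (𝓝 (m * (m - 1) / (γ * (γ - 1) * (m - γ + 1) * (m - γ)))) :=
  stmt_18_general hγ1 hm FR hreg hvt
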